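/- Let G be a projection game and ρ ∈ [0,1]. If val₊(G)² > ρ, then the collision value satisfies ‖G‖² > (1−√(1−ρ²))/(1+√(1−ρ²)). Contrapositively, for every δ ∈ [0,1], if ‖G‖² < δ then val₊(G)² < 2√δ/(1+δ). -/

import Mathlib

open Finset

/-- A projection game: finite nonempty question sets `Q1` (Alice) and `Q2` (Bob),
a finite nonempty alphabet `A`, and a probability mass function `μ` on triples
`(u, v, π)` where `π : A → Option A` encodes a projection constraint
(the answer pair `(α, β)` satisfies `π` iff `π β = some α`). -/
structure ProjGame where
  Q1 : Type
  Q2 : Type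
  A : Type
  [fQ1 : Fintype Q1]
  [fQ2 : Fintype Q2]
  [fA : Fintype A]
  [neQ1 : Nonempty Q1]
  [neQ2 : Nonempty Q2]
  [neA : Nonempty A]
  [dQ1 : DecidableEq Q1]
  [dQ2 : DecidableEq Q2]
  [dA : DecidableEq A]
  μ : Q1 × Q2 × (A → Option A) → ℝ
  μ_nonneg : ∀ x, 0 ≤ μ x
  μ_sum : ∑ x, μ x = 1

attribute [instance] ProjGame.fQ1 ProjGame.fQ2 ProjGame.fA
  ProjGame.neQ1 ProjGame.neQ2 ProjGame.neA ProjGame.dQ1 ProjGame.dQ2 ProjGame.dA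

namespace ProjGame

variable (G : ProjGame)

/-- The `U`-marginal (Alice-side marginal) of `μ`. -/
noncomputable def wU (u : G.Q1) : ℝ := ∑ v, ∑ π, G.μ (u, v, π)

/-- The `V`-marginal (Bob-side marginal) of `μ`. -/
noncomputable def wV (v : G.Q2) : ℝ := ∑ u, ∑ π, G.μ (u, v, π)

/-- The game operator: `(Gf)(u,α) = E_{(v,π)|u} [∑_{β : π β = some α} f (v,β)]`. -/
noncomputable def op (f : G.Q2 × G.A → ℝ) : G.Q1 × G.A → ℝ :=
  fun p =>
    (∑ v, ∑ π, G.μ (p.1, v, π) * ∑ β, if π β = some p.2 then f (v, β) else 0) / G.wU p.1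

/-- Squared norm on functions on `U × Σ`: `‖g‖² = E_u [∑_α g(u,α)²]`. -/
noncomputable def normUsq (g : G.Q1 × G.A → ℝ) : ℝ := ∑ u, G.wU u * ∑ α, (g (u, α)) ^ 2

/-- Squared norm on functions on `V × Σ`: `‖f‖² = E_v [∑_β f(v,β)²]`. -/
noncomputable def normVsq (f : G.Q2 × G.A → ℝ) : ℝ := ∑ v, G.wV v * ∑ β, (f (v, β)) ^ 2

/-- Inner product `⟨g, g'⟩ = E_u [∑_α g(u,α) g'(u,α)]`. -/
noncomputable def inn (g g' : G.Q1 × G.A → ℝ) : ℝ :=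
  ∑ u, G.wU u * ∑ α, g (u, α) * g' (u, α)

/-- An assignment for Bob. -/
def IsBob (f : G.Q2 × G.A → ℝ) : Prop := (∀ p, 0 ≤ f p) ∧ ∀ v, ∑ β, f (v, β) = 1

/-- An assignment for Alice. -/
def IsAlice (g : G.Q1 × G.A → ℝ) : Prop := (∀ p, 0 ≤ g p) ∧ ∀ u, ∑ α, g (u, α) = 1

/-- The value of the game: `val(G) = max ⟨g, Gf⟩` over assignments. -/
noncomputable def val : ℝ :=
  sSup { x | ∃ f g, G.IsBob f ∧ G.IsAlice g ∧ x = G.inn g (G.op f) }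

/-- The collision value `‖G‖ = max_f ‖Gf‖` over assignments `f` for Bob. -/
noncomputable def collVal : ℝ :=
  sSup { x | ∃ f, G.IsBob f ∧ x = Real.sqrt (G.normUsq (G.op f)) }

/-- Product of projection constraints. -/
def tensorC {A A' : Type} (π : A → Option A) (π' : A' → Option A') :
    A × A' → Option (A × A') :=
  fun b => (π b.1).bind fun a => (π' b.2).map fun a' => (a, a')

/-- The product (parallel repetition) of two projection games. -/
noncomputable def tensor (G H : ProjGame) : ProjGame where
  Q1 := G.Q1 × H.Q1
  Q2 := G.Q2 × H.Q2
  A := G.A × H.A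
  μ := fun x =>
    ∑ y : (G.Q1 × G.Q2 × (G.A → Option G.A)) × (H.Q1 × H.Q2 × (H.A → Option H.A)),
      if ((y.1.1, y.2.1), (y.1.2.1, y.2.2.1), tensorC y.1.2.2 y.2.2.2) = x
      then G.μ y.1 * H.μ y.2 else 0
  μ_nonneg := by
    intro x
    refine Finset.sum_nonneg fun y _ => ?_
    split
    · exact mul_nonneg (G.μ_nonneg _) (H.μ_nonneg _)
    · exact le_refl 0
  μ_sum := by
    rw [Finset.sum_comm]
    simp only [Finset.sum_ite_eq, Finset.mem_univ, if_true]
    rw [Fintype.sum_prod_type]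
    calc (∑ y1, ∑ y2, G.μ y1 * H.μ y2)
        = (∑ y1, G.μ y1) * (∑ y2, H.μ y2) := by rw [Finset.sum_mul_sum]
      _ = 1 := by rw [G.μ_sum, H.μ_sum, mul_one]

/-- `G.iterTensor k` is the `(k+1)`-fold parallel repetition `G^{⊗(k+1)}`. -/
noncomputable def iterTensor (G : ProjGame) : ℕ → ProjGame
  | 0 => G
  | n + 1 => G.tensor (G.iterTensor n)

/-- `val₊(G)`: supremum of values of vector assignments. -/
noncomputable def valPlus (G : ProjGame) : ℝ :=
  sSup { x | ∃ n : ℕ, 0 < n ∧ ∃ f : G.Q2 × G.A → Fin n → ℝ,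
    (∀ p i, 0 ≤ f p i) ∧
    (∀ v, Real.sqrt (∑ i, (∑ β, f (v, β) i) ^ 2) ≤ 1) ∧
    x = Real.sqrt (∑ u, G.wU u * ∑ α, ∑ i, (G.op (fun q => f q i) (u, α)) ^ 2) }

/-- `‖Th‖² = E_v [(∑_β h(v,β))²]`. -/
noncomputable def Tnormsq (G : ProjGame) (h : G.Q2 × G.A → ℝ) : ℝ :=
  ∑ v, G.wV v * (∑ β, h (v, β)) ^ 2

/-- `λ₊(G)`: supremum of `‖Gh‖/‖Th‖` over nonnegative `h` with `‖Th‖ > 0`. -/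
noncomputable def lambdaPlus (G : ProjGame) : ℝ :=
  sSup { x | ∃ h : G.Q2 × G.A → ℝ, (∀ p, 0 ≤ h p) ∧
    0 < Real.sqrt (G.Tnormsq h) ∧
    x = Real.sqrt (G.normUsq (G.op h)) / Real.sqrt (G.Tnormsq h) }

/-- The symmetrized distribution on `V × V` (with the constraints marginalized out). -/
noncomputable def msym (G : ProjGame) (v v' : G.Q2) : ℝ :=
  ∑ u, ((∑ π, G.μ (u, v, π)) * (∑ π', G.μ (u, v', π'))) / G.wU u

/-- `G` is `γ`-expanding: the Markov operator of the symmetrized constraint graph has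
spectral gap at least `γ`, i.e. `|⟨x, Ax⟩| ≤ (1-γ) E_v[x(v)²]` for mean-zero `x`. -/
def IsExpanding (G : ProjGame) (γ : ℝ) : Prop :=
  ∀ x : G.Q2 → ℝ, (∑ v, G.wV v * x v) = 0 →
    |∑ v, ∑ v', G.msym v v' * x v * x v'| ≤ (1 - γ) * ∑ v, G.wV v * (x v) ^ 2

/-- The symmetrized distribution on `(v, v', π, π')`. -/
noncomputable def msymFull (G : ProjGame) (v v' : G.Q2) (π π' : G.A → Option G.A) : ℝ :=
  ∑ u, (G.μ (u, v, π) * G.μ (u, v', π')) / G.wU u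

/-- The value of the assignment `x` in the symmetrized game `G_sym`. -/
noncomputable def symValAssign (G : ProjGame) (x : G.Q2 → G.A) : ℝ :=
  ∑ v, ∑ v', ∑ π, ∑ π', G.msymFull v v' π π' *
    (if ∃ α, π (x v) = some α ∧ π' (x v') = some α then 1 else 0)

/-- The value of the symmetrized game `G_sym`. -/
noncomputable def symVal (G : ProjGame) : ℝ :=
  sSup { r | ∃ x : G.Q2 → G.A, r = G.symValAssign x }

end ProjGame

/-!
Normalising the `i`-th coordinate of a vector assignment `f` gives an assignment `F i` of Bob and a
scale `x v i ≥ 0`, where `f (v, β) i = x v i * F i (v, β)` and `∑ i, x v i ^ 2 ≤ 1`. Let the copies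
of Bob use common randomness: every pair of an index `i` and a threshold `t` carries an exponential
clock, `i` proposes an answer at the questions `v` with `t ≤ x v i`, and Bob follows the `F i` of
the first clock that rings among those proposing at his question. With the right rates, two copies
asked `v` and `v'` follow a common clock of index `i` with probability
`min (x v i) (x v' i) ^ 2 / ∑ j, max (x v j) (x v' j) ^ 2`. Cauchy–Schwarz bounds the collision
`∑ i, x v i * x v' i * q i` of the vector assignment, where `q i` is that of `F i`, by
`2 * √c / (1 + c)`, where `c` is the resulting probability of colliding by following a common clock.
That function of `c` is concave and increasing on `[0, 1]`, and the mean of `c` is at most `‖G‖²`,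
because Bob's random choice can be fixed.
-/

/-- The upper bound on `val₊(G)²` when `δ` bounds the squared collision value; it equals
`sin (2 * arctan √δ)`. -/
noncomputable def approxBound (δ : ℝ) : ℝ := 2 * √δ / (1 + δ)

section ApproxBound

lemma strictMonoOn_two_mul_div_one_add_sq :
    StrictMonoOn (fun t : ℝ ↦ 2 * t / (1 + t ^ 2)) (Set.Icc 0 1) := by
  intro s ⟨hs, _⟩ t ⟨_, ht⟩ hst
  have hst1 : s * t < 1 := by nlinarith
  rw [div_lt_div_iff₀ (by positivity) (by positivity)]
  nlinarith [mul_pos (sub_pos.2 hst) (sub_pos.2 hst1)]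

lemma two_mul_div_one_add_sq_le_tangent {s t : ℝ} (hs : 0 ≤ s) (ht₀ : 0 ≤ t) (ht₁ : t ≤ 1) :
    2 * s / (1 + s ^ 2) ≤
      2 * t / (1 + t ^ 2) + 2 * (1 - t ^ 2) / (1 + t ^ 2) ^ 2 * (s - t) := by
  have gap : 2 * t / (1 + t ^ 2) + 2 * (1 - t ^ 2) / (1 + t ^ 2) ^ 2 * (s - t)
      - 2 * s / (1 + s ^ 2) =
      2 * (s - t) ^ 2 * (s * (1 - t ^ 2) + 2 * t) / ((1 + t ^ 2) ^ 2 * (1 + s ^ 2)) := by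
    field_simp
    ring
  have ht : 0 ≤ 1 - t ^ 2 := sub_nonneg.2 (pow_le_one₀ ht₀ ht₁)
  rw [← sub_nonneg, gap]
  positivity

lemma concaveOn_two_mul_div_one_add_sq :
    ConcaveOn ℝ (Set.Icc 0 1) (fun t : ℝ ↦ 2 * t / (1 + t ^ 2)) := by
  refine ⟨convex_Icc 0 1, fun x hx y hy a b ha hb hab ↦ ?_⟩
  obtain ⟨ht₀, ht₁⟩ := convex_Icc (0 : ℝ) 1 hx hy ha hb hab
  simp only [smul_eq_mul] at ht₀ ht₁ ⊢
  set t := a * x + b * y with ht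
  set m := 2 * (1 - t ^ 2) / (1 + t ^ 2) ^ 2
  calc a * (2 * x / (1 + x ^ 2)) + b * (2 * y / (1 + y ^ 2))
      ≤ a * (2 * t / (1 + t ^ 2) + m * (x - t)) + b * (2 * t / (1 + t ^ 2) + m * (y - t)) := by
        gcongr
        · exact two_mul_div_one_add_sq_le_tangent hx.1 ht₀ ht₁
        · exact two_mul_div_one_add_sq_le_tangent hy.1 ht₀ ht₁
    _ = (a + b) * (2 * t / (1 + t ^ 2)) + m * (a * x + b * y - (a + b) * t) := by ring
    _ = 2 * t / (1 + t ^ 2) := by rw [hab, ← ht]; ring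

lemma approxBound_eq {δ : ℝ} (hδ : 0 ≤ δ) : approxBound δ = 2 * √δ / (1 + √δ ^ 2) := by
  rw [approxBound, Real.sq_sqrt hδ]

lemma approxBound_nonneg {δ : ℝ} (hδ : 0 ≤ δ) : 0 ≤ approxBound δ := by
  unfold approxBound
  positivity

lemma sqrt_mem_Icc_zero_one {δ : ℝ} (hδ : δ ∈ Set.Icc (0 : ℝ) 1) : √δ ∈ Set.Icc (0 : ℝ) 1 :=
  ⟨Real.sqrt_nonneg δ, Real.sqrt_le_one.2 hδ.2⟩

lemma strictMonoOn_approxBound : StrictMonoOn approxBound (Set.Icc 0 1) := by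
  intro δ hδ ε hε hlt
  rw [approxBound_eq hδ.1, approxBound_eq hε.1]
  exact strictMonoOn_two_mul_div_one_add_sq (sqrt_mem_Icc_zero_one hδ) (sqrt_mem_Icc_zero_one hε)
    (Real.sqrt_lt_sqrt hδ.1 hlt)

lemma concaveOn_approxBound : ConcaveOn ℝ (Set.Icc 0 1) approxBound := by
  have himage : Real.sqrt '' Set.Icc 0 1 ⊆ Set.Icc 0 1 :=
    Set.image_subset_iff.2 fun _ ↦ sqrt_mem_Icc_zero_one
  have hconvex : Convex ℝ (Real.sqrt '' Set.Icc 0 1) :=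
    (isPreconnected_Icc.image _ Real.continuous_sqrt.continuousOn).ordConnected.convex
  have hsqrt : ConcaveOn ℝ (Set.Icc 0 1) Real.sqrt :=
    Real.strictConcaveOn_sqrt.concaveOn.subset Set.Icc_subset_Ici_self (convex_Icc 0 1)
  refine ((concaveOn_two_mul_div_one_add_sq.subset himage hconvex).comp hsqrt
    (strictMonoOn_two_mul_div_one_add_sq.monotoneOn.mono himage)).congr fun δ hδ ↦ ?_
  exact (approxBound_eq hδ.1).symm

lemma approxBound_one_sub_sqrt_div {ρ : ℝ} (hρ₀ : 0 ≤ ρ) (hρ₁ : ρ ≤ 1) :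
    approxBound ((1 - √(1 - ρ ^ 2)) / (1 + √(1 - ρ ^ 2))) = ρ := by
  set r := √(1 - ρ ^ 2)
  have hr : 0 < 1 + r := by positivity
  have hr2 : r ^ 2 = 1 - ρ ^ 2 := Real.sq_sqrt (sub_nonneg.2 (pow_le_one₀ hρ₀ hρ₁))
  have hsq : (1 - r) / (1 + r) = (ρ / (1 + r)) ^ 2 := by
    field_simp
    linarith
  have hsqrt : √((1 - r) / (1 + r)) = ρ / (1 + r) := by rw [hsq, Real.sqrt_sq (by positivity)]
  rw [approxBound, hsqrt]
  field_simp
  ring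

lemma one_sub_div_one_add_mem_Icc {r : ℝ} (hr₀ : 0 ≤ r) (hr₁ : r ≤ 1) :
    (1 - r) / (1 + r) ∈ Set.Icc (0 : ℝ) 1 :=
  ⟨div_nonneg (by linarith) (by linarith), (div_le_one (by linarith)).2 (by linarith)⟩

lemma le_approxBound_div {p a M : ℝ} (ha : 0 ≤ a) (hM : 0 ≤ M) (haM : a + M ≤ 2)
    (hp : p ^ 2 ≤ a * M) : p ≤ approxBound (a / M) := by
  have hp' : p ≤ √(a * M) := Real.le_sqrt_of_sq_le hp
  rcases hM.eq_or_lt with rfl | hM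
  · exact (hp'.trans_eq (by simp)).trans (approxBound_nonneg (by simp))
  have hsqrt : √(a * M) = √(a / M) * M := by
    rw [show a * M = a / M * M ^ 2 by field_simp, Real.sqrt_mul (by positivity),
      Real.sqrt_sq hM.le]
  rw [approxBound, le_div_iff₀ (by positivity)]
  calc p * (1 + a / M) ≤ √(a / M) * M * (1 + a / M) := by
        gcongr
        exact hp'.trans_eq hsqrt
    _ = √(a / M) * (a + M) := by field_simp; ring
    _ ≤ √(a / M) * 2 := by gcongr
    _ = 2 * √(a / M) := mul_comm _ _

end ApproxBound

section MinMax

variable {ι R : Type*} [Fintype ι] [CommRing R] [LinearOrder R] [IsStrictOrderedRing R]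

/-- Cauchy–Schwarz after splitting each product `x i * y i` as `min * max`. -/
lemma sum_mul_mul_sq_le (x y : ι → R) {q : ι → R} (hq₀ : ∀ i, 0 ≤ q i)
    (hq₁ : ∀ i, q i ≤ 1) :
    (∑ i, x i * y i * q i) ^ 2 ≤ (∑ i, min (x i) (y i) ^ 2 * q i) * ∑ i, max (x i) (y i) ^ 2 := by
  refine sum_sq_le_sum_mul_sum_of_sq_le_mul _ (fun i _ ↦ mul_nonneg (sq_nonneg _) (hq₀ i))
    (fun i _ ↦ sq_nonneg _) fun i _ ↦ ?_
  calc (x i * y i * q i) ^ 2 = (x i * y i) ^ 2 * (q i * q i) := by ring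
    _ ≤ (x i * y i) ^ 2 * (1 * q i) := by gcongr; exacts [hq₀ i, hq₁ i]
    _ = min (x i) (y i) ^ 2 * q i * max (x i) (y i) ^ 2 := by rw [← min_mul_max (x i)]; ring

lemma sum_min_sq_mul_add_sum_max_sq_le (x y : ι → R) {q : ι → R} (hq₁ : ∀ i, q i ≤ 1) :
    ∑ i, min (x i) (y i) ^ 2 * q i + ∑ i, max (x i) (y i) ^ 2 ≤ ∑ i, x i ^ 2 + ∑ i, y i ^ 2 := by
  simp only [← sum_add_distrib]
  refine sum_le_sum fun i _ ↦ ?_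
  have hmin : min (x i) (y i) ^ 2 * q i ≤ min (x i) (y i) ^ 2 :=
    mul_le_of_le_one_right (sq_nonneg _) (hq₁ i)
  calc min (x i) (y i) ^ 2 * q i + max (x i) (y i) ^ 2
      ≤ min (x i) (y i) ^ 2 + max (x i) (y i) ^ 2 := by gcongr
    _ = x i ^ 2 + y i ^ 2 := by
      rcases le_total (x i) (y i) with h | h <;> simp [h, add_comm]

lemma sum_min_sq_mul_le_sum_max_sq {x y q : ι → R} (hx : ∀ i, 0 ≤ x i) (hy : ∀ i, 0 ≤ y i)
    (hq₁ : ∀ i, q i ≤ 1) :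
    ∑ i, min (x i) (y i) ^ 2 * q i ≤ ∑ i, max (x i) (y i) ^ 2 := by
  refine sum_le_sum fun i _ ↦ (mul_le_of_le_one_right (sq_nonneg _) (hq₁ i)).trans ?_
  have hmin : 0 ≤ min (x i) (y i) := le_min (hx i) (hy i)
  gcongr
  exact min_le_max

end MinMax

lemma convex_lowerClosure {𝕜 E : Type*} [Semiring 𝕜] [PartialOrder 𝕜] [AddCommMonoid E]
    [PartialOrder E] [IsOrderedAddMonoid E] [Module 𝕜 E] [PosSMulMono 𝕜 E] {s : Set E}
    (hs : Convex 𝕜 s) : Convex 𝕜 (lowerClosure s : Set E) := by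
  rintro x ⟨x', hx', hxx'⟩ y ⟨y', hy', hyy'⟩ a b ha hb hab
  exact ⟨a • x' + b • y', hs hx' hy' ha hb hab,
    add_le_add (smul_le_smul_of_nonneg_left hxx' ha) (smul_le_smul_of_nonneg_left hyy' hb)⟩

lemma exists_sum_filter_le_eq {α R : Type*} [LinearOrder α] [AddCommGroup R] [PartialOrder R]
    [IsOrderedAddMonoid R] (s : Finset α) {g : α → R} (hg : MonotoneOn g s)
    (hg₀ : ∀ a ∈ s, 0 ≤ g a) :
    ∃ w : α → R, (∀ t ∈ s, 0 ≤ w t) ∧ ∀ a ∈ s, ∑ t ∈ s with t ≤ a, w t = g a := by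
  induction s using Finset.induction_on_max with
  | empty => exact ⟨0, by simp⟩
  | insert a s hlt ih =>
    have ha : a ∉ s := fun h ↦ (hlt a h).false
    obtain ⟨w, hw, hsum⟩ := ih (hg.mono (by simp)) fun b hb ↦ hg₀ b (mem_insert_of_mem hb)
    have htotal : ∑ t ∈ s, w t ≤ g a := by
      rcases s.eq_empty_or_nonempty with rfl | hs
      · simpa using hg₀ a
      · have hmax := s.max'_mem hs
        calc ∑ t ∈ s, w t = ∑ t ∈ s with t ≤ s.max' hs, w t := by
              rw [filter_true_of_mem fun t ht ↦ s.le_max' t ht]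
          _ = g (s.max' hs) := hsum _ hmax
          _ ≤ g a := hg (by simp [hmax]) (by simp) (hlt _ hmax).le
    have hupdate : ∀ t ∈ s, Function.update w a (g a - ∑ t ∈ s, w t) t = w t := fun t ht ↦
      Function.update_of_ne (hlt t ht).ne _ _
    refine ⟨Function.update w a (g a - ∑ t ∈ s, w t), fun t ht ↦ ?_, fun b hb ↦ ?_⟩
    · rcases mem_insert.1 ht with rfl | ht
      · simpa using htotal
      · exact (hw t ht).trans_eq (hupdate t ht).symm
    · rcases mem_insert.1 hb with rfl | hb
      · rw [filter_true_of_mem (by simpa using fun t ht ↦ (hlt t ht).le), sum_insert ha,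
          Function.update_self, sum_congr rfl hupdate, sub_add_cancel]
      · rw [filter_insert, if_neg (hlt b hb).not_ge, ← hsum b hb]
        exact sum_congr rfl fun t ht ↦ hupdate t (mem_filter.1 ht).1

lemma sum_product_filter_le_mul {ι α R : Type*} [Fintype ι] [LE α] [DecidableLE α]
    [NonUnitalNonAssocSemiring R] {s : Finset α} {w g : α → R}
    (hw : ∀ a ∈ s, ∑ t ∈ s with t ≤ a, w t = g a) {c : ι → α} (hc : ∀ i, c i ∈ s) (φ : ι → R) :
    ∑ o ∈ univ ×ˢ s with o.2 ≤ c o.1, w o.2 * φ o.1 = ∑ i, g (c i) * φ i := by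
  simp only [← hw _ (hc _), sum_mul, sum_filter, sum_product, ite_mul, zero_mul]

namespace ProjGame

variable {G : ProjGame}

/-- A question to Bob together with the constraint his answer is tested against. -/
abbrev Query (G : ProjGame) : Type := G.Q2 × (G.A → Option G.A)

/-- Real kernels on pairs of Bob's question-answer pairs; for assignments `f`, `g` the kernel
`fun a b ↦ f a * g b` is the joint law of two independent answers. -/
abbrev Kernel (G : ProjGame) : Type := G.Q2 × G.A → G.Q2 × G.A → ℝ

section Weights

lemma wU_nonneg (u : G.Q1) : 0 ≤ G.wU u :=
  sum_nonneg fun _ _ ↦ sum_nonneg fun _ _ ↦ G.μ_nonneg _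

lemma wU_eq_sum (u : G.Q1) : G.wU u = ∑ y : G.Query, G.μ (u, y) := by
  rw [Fintype.sum_prod_type, wU]

lemma sum_wU : ∑ u, G.wU u = 1 := by
  simp only [wU_eq_sum, ← Fintype.sum_prod_type', G.μ_sum]

/-- The probability of drawing Alice's question `u` and then, independently given `u`, the two
queries `y` and `y'` to Bob. -/
noncomputable def pairWeight (z : G.Q1 × G.Query × G.Query) : ℝ :=
  G.μ (z.1, z.2.1) * G.μ (z.1, z.2.2) / G.wU z.1

lemma pairWeight_nonneg (z : G.Q1 × G.Query × G.Query) : 0 ≤ G.pairWeight z :=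
  div_nonneg (mul_nonneg (G.μ_nonneg _) (G.μ_nonneg _)) (wU_nonneg _)

lemma sum_pairWeight_mul (φ : G.Q1 → G.Query → ℝ) :
    ∑ z, G.pairWeight z * (φ z.1 z.2.1 * φ z.1 z.2.2) =
      ∑ u, (∑ y, G.μ (u, y) * φ u y) ^ 2 / G.wU u := by
  simp only [Fintype.sum_prod_type (α₁ := G.Q1)]
  refine sum_congr rfl fun u _ ↦ ?_
  rw [sq, sum_mul_sum, ← Fintype.sum_prod_type', sum_div]
  refine sum_congr rfl fun z _ ↦ ?_
  rw [pairWeight]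
  ring

lemma sum_pairWeight : ∑ z, G.pairWeight z = 1 := by
  have h := sum_pairWeight_mul (G := G) fun _ _ ↦ 1
  simp only [mul_one, ← wU_eq_sum, sq, mul_self_div_self, sum_wU] at h
  exact h

end Weights

section Collision

/-- The mass `f` puts on the answers that the constraint of the query `y` projects to `α`. -/
noncomputable def projMass (f : G.Q2 × G.A → ℝ) (y : G.Query) (α : G.A) : ℝ :=
  ∑ β with y.2 β = some α, f (y.1, β)

lemma op_eq_sum_projMass (f : G.Q2 × G.A → ℝ) (u : G.Q1) (α : G.A) :
    G.op f (u, α) = (∑ y, G.μ (u, y) * projMass f y α) / G.wU u := by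
  simp only [op, projMass, sum_filter, Fintype.sum_prod_type]

lemma projMass_nonneg {f : G.Q2 × G.A → ℝ} (hf : ∀ p, 0 ≤ f p) (y : G.Query) (α : G.A) :
    0 ≤ projMass f y α :=
  sum_nonneg fun _ _ ↦ hf _

lemma sum_projMass_le {f : G.Q2 × G.A → ℝ} (hf : ∀ p, 0 ≤ f p) (y : G.Query) :
    ∑ α, projMass f y α ≤ ∑ β, f (y.1, β) := by
  simp only [projMass, sum_filter]
  rw [sum_comm]
  refine sum_le_sum fun β _ ↦ ?_
  cases y.2 β with
  | none => simpa using hf (y.1, β)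
  | some α => simp

/-- The total weight a kernel puts on the pairs of answers that the constraints of `y` and `y'`
project to a common symbol. -/
noncomputable def collide (y y' : G.Query) : G.Kernel →ₗ[ℝ] ℝ :=
  ∑ α, ∑ β with y.2 β = some α, ∑ β' with y'.2 β' = some α,
    LinearMap.proj (y'.1, β') ∘ₗ LinearMap.proj (y.1, β)

lemma collide_apply (y y' : G.Query) (K : G.Kernel) :
    collide y y' K = ∑ α, ∑ β with y.2 β = some α, ∑ β' with y'.2 β' = some α,
      K (y.1, β) (y'.1, β') := by
  simp [collide]

lemma collide_mono (y y' : G.Query) : Monotone (collide y y') := by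
  intro K K' h
  simp only [collide_apply]
  gcongr
  exact h _ _

lemma collide_smul_of_fst (c : G.Q2 → G.Q2 → ℝ) (y y' : G.Query) (K : G.Kernel) :
    collide y y' (fun a b ↦ c a.1 b.1 * K a b) = c y.1 y'.1 * collide y y' K := by
  simp only [collide_apply, mul_sum]

lemma collide_mul (f g : G.Q2 × G.A → ℝ) (y y' : G.Query) :
    collide y y' (fun a b ↦ f a * g b) = ∑ α, projMass f y α * projMass g y' α := by
  simp only [collide_apply, projMass, sum_mul_sum]

lemma collide_mul_nonneg {f g : G.Q2 × G.A → ℝ} (hf : ∀ p, 0 ≤ f p) (hg : ∀ p, 0 ≤ g p)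
    (y y' : G.Query) : 0 ≤ collide y y' (fun a b ↦ f a * g b) := by
  rw [collide_mul]
  exact sum_nonneg fun α _ ↦ mul_nonneg (projMass_nonneg hf y α) (projMass_nonneg hg y' α)

lemma collide_mul_le_one {f g : G.Q2 × G.A → ℝ} (hf : G.IsBob f) (hg : G.IsBob g)
    (y y' : G.Query) : collide y y' (fun a b ↦ f a * g b) ≤ 1 := by
  have hg_le (α : G.A) : projMass g y' α ≤ 1 := by
    calc projMass g y' α ≤ ∑ α, projMass g y' α :=
          single_le_sum (fun α _ ↦ projMass_nonneg hg.1 y' α) (mem_univ α)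
      _ ≤ 1 := (sum_projMass_le hg.1 y').trans_eq (hg.2 y'.1)
  calc collide y y' (fun a b ↦ f a * g b) = ∑ α, projMass f y α * projMass g y' α :=
        collide_mul f g y y'
    _ ≤ ∑ α, projMass f y α := sum_le_sum fun α _ ↦
        mul_le_of_le_one_right (projMass_nonneg hf.1 y α) (hg_le α)
    _ ≤ 1 := (sum_projMass_le hf.1 y).trans_eq (hf.2 y.1)

/-- The expectation of `collide` over the two queries of a random question to Alice; it extends
`‖Gf‖²`, a quadratic form in `f`, to a linear functional of kernels. -/
noncomputable def collisionForm (G : ProjGame) : G.Kernel →ₗ[ℝ] ℝ :=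
  ∑ z, G.pairWeight z • collide z.2.1 z.2.2

lemma collisionForm_apply (K : G.Kernel) :
    G.collisionForm K = ∑ z, G.pairWeight z * collide z.2.1 z.2.2 K := by
  simp [collisionForm]

lemma collisionForm_mono : Monotone G.collisionForm := by
  intro K K' h
  simp only [collisionForm_apply]
  exact sum_le_sum fun z _ ↦ mul_le_mul_of_nonneg_left (collide_mono _ _ h) (pairWeight_nonneg z)

lemma normUsq_op (f : G.Q2 × G.A → ℝ) :
    G.normUsq (G.op f) = G.collisionForm (fun a b ↦ f a * f b) := by
  have hscale (u : G.Q1) (x : ℝ) : G.wU u * (x / G.wU u) ^ 2 = x ^ 2 / G.wU u := by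
    rcases eq_or_ne (G.wU u) 0 with h | h
    · simp [h]
    · field_simp
  simp only [normUsq, op_eq_sum_projMass, mul_sum, hscale, collisionForm_apply, collide_mul]
  rw [sum_comm, sum_comm (s := univ (α := G.Q1 × G.Query × G.Query))]
  exact sum_congr rfl fun α _ ↦ (sum_pairWeight_mul fun _ y ↦ projMass f y α).symm

end Collision

section CollisionValue

lemma exists_isBob (G : ProjGame) : ∃ f, G.IsBob f := by
  obtain ⟨α⟩ := G.neA
  exact ⟨fun p ↦ if p.2 = α then 1 else 0, fun p ↦ by positivity, fun v ↦ by simp⟩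

lemma normUsq_op_le_one {f : G.Q2 × G.A → ℝ} (hf : G.IsBob f) : G.normUsq (G.op f) ≤ 1 := by
  rw [normUsq_op, collisionForm_apply, ← sum_pairWeight (G := G)]
  exact sum_le_sum fun z _ ↦
    mul_le_of_le_one_right (pairWeight_nonneg z) (collide_mul_le_one hf hf _ _)

lemma collVal_nonneg : 0 ≤ G.collVal := by
  refine Real.sSup_nonneg ?_
  rintro _ ⟨f, -, rfl⟩
  exact Real.sqrt_nonneg _

lemma sqrt_normUsq_op_le_one {f : G.Q2 × G.A → ℝ} (hf : G.IsBob f) :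
    √(G.normUsq (G.op f)) ≤ 1 :=
  Real.sqrt_le_one.2 (normUsq_op_le_one hf)

lemma collVal_le_one : G.collVal ≤ 1 := by
  refine Real.sSup_le ?_ zero_le_one
  rintro _ ⟨f, hf, rfl⟩
  exact sqrt_normUsq_op_le_one hf

lemma collVal_sq_mem_Icc : G.collVal ^ 2 ∈ Set.Icc (0 : ℝ) 1 :=
  ⟨sq_nonneg _, pow_le_one₀ collVal_nonneg collVal_le_one⟩

lemma normUsq_op_le_collVal_sq {f : G.Q2 × G.A → ℝ} (hf : G.IsBob f) :
    G.normUsq (G.op f) ≤ G.collVal ^ 2 := by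
  have hbdd : BddAbove {x | ∃ f, G.IsBob f ∧ x = √(G.normUsq (G.op f))} := by
    refine ⟨1, ?_⟩
    rintro _ ⟨g, hg, rfl⟩
    exact sqrt_normUsq_op_le_one hg
  exact Real.sqrt_le_left collVal_nonneg |>.1 (le_csSup hbdd ⟨f, hf, rfl⟩)

end CollisionValue

section SharedRandomness

/-- The kernels lying below the joint law of the answers given by two copies of Bob who share a
random choice of assignment. -/
def sharedKernels (G : ProjGame) : Set G.Kernel :=
  lowerClosure (convexHull ℝ {K : G.Kernel | ∃ f, G.IsBob f ∧ K = fun a b ↦ f a * f b})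

lemma convex_sharedKernels : Convex ℝ G.sharedKernels :=
  convex_lowerClosure (convex_convexHull ℝ _)

lemma isLowerSet_sharedKernels : IsLowerSet G.sharedKernels :=
  (lowerClosure _).lower

lemma mul_mem_sharedKernels {f : G.Q2 × G.A → ℝ} (hf : G.IsBob f) :
    (fun a b ↦ f a * f b) ∈ G.sharedKernels :=
  subset_lowerClosure (subset_convexHull ℝ _ ⟨f, hf, rfl⟩)

lemma zero_mem_sharedKernels : 0 ∈ G.sharedKernels := by
  obtain ⟨f, hf⟩ := G.exists_isBob
  exact isLowerSet_sharedKernels (fun a b ↦ mul_nonneg (hf.1 a) (hf.1 b)) (mul_mem_sharedKernels hf)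

lemma collisionForm_le_collVal_sq {K : G.Kernel} (hK : K ∈ G.sharedKernels) :
    G.collisionForm K ≤ G.collVal ^ 2 := by
  obtain ⟨K', hK', hle⟩ := mem_lowerClosure.1 hK
  refine (collisionForm_mono hle).trans ?_
  refine convexHull_min ?_ (convex_halfSpace_le G.collisionForm.isLinear (G.collVal ^ 2)) hK'
  rintro _ ⟨f, hf, rfl⟩
  exact (normUsq_op f).symm.trans_le (normUsq_op_le_collVal_sq hf)

/-- The kernel that follows `f` at pairs of questions in `E` and `K` at pairs of questions outside
`E`, and vanishes when just one question lies in `E`. -/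
def patch (E : Finset G.Q2) (f : G.Q2 × G.A → ℝ) (K : G.Kernel) : G.Kernel := fun a b ↦
  if a.1 ∈ E ∧ b.1 ∈ E then f a * f b else if a.1 ∈ E ∨ b.1 ∈ E then 0 else K a b

lemma patch_mono (E : Finset G.Q2) (f : G.Q2 × G.A → ℝ) : Monotone (patch E f) := by
  intro K K' h a b
  unfold patch
  split_ifs
  exacts [le_rfl, le_rfl, h a b]

lemma patch_combo (E : Finset G.Q2) (f : G.Q2 × G.A → ℝ) (K K' : G.Kernel) {c d : ℝ}
    (hcd : c + d = 1) : patch E f (c • K + d • K') = c • patch E f K + d • patch E f K' := by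
  funext a b
  simp only [patch, Pi.add_apply, Pi.smul_apply, smul_eq_mul]
  split_ifs
  · rw [← add_mul, hcd, one_mul]
  · simp
  · rfl

lemma patch_mul_mem_sharedKernels (E : Finset G.Q2) {f g : G.Q2 × G.A → ℝ} (hf : G.IsBob f)
    (hg : G.IsBob g) : patch E f (fun a b ↦ g a * g b) ∈ G.sharedKernels := by
  let h : G.Q2 × G.A → ℝ := fun a ↦ if a.1 ∈ E then f a else g a
  have hh₀ (a : G.Q2 × G.A) : 0 ≤ h a := by
    dsimp only [h]
    split_ifs
    exacts [hf.1 a, hg.1 a]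
  have hh : G.IsBob h := by
    refine ⟨hh₀, fun v ↦ ?_⟩
    by_cases hv : v ∈ E
    · simpa [h, hv] using hf.2 v
    · simpa [h, hv] using hg.2 v
  refine isLowerSet_sharedKernels (fun a b ↦ ?_) (mul_mem_sharedKernels hh)
  unfold patch
  split_ifs with hand hor
  · simp [h, hand.1, hand.2]
  · exact mul_nonneg (hh₀ a) (hh₀ b)
  · simp [h, not_or.1 hor]

lemma patch_mem_sharedKernels (E : Finset G.Q2) {f : G.Q2 × G.A → ℝ} (hf : G.IsBob f)
    {K : G.Kernel} (hK : K ∈ G.sharedKernels) : patch E f K ∈ G.sharedKernels := by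
  obtain ⟨K', hK', hle⟩ := mem_lowerClosure.1 hK
  refine isLowerSet_sharedKernels (patch_mono E f hle) ?_
  refine convexHull_min (t := patch E f ⁻¹' G.sharedKernels) ?_ ?_ hK'
  · rintro _ ⟨g, hg, rfl⟩
    exact patch_mul_mem_sharedKernels E hf hg
  · intro K₁ hK₁ K₂ hK₂ c d hc hd hcd
    rw [Set.mem_preimage, patch_combo E f K₁ K₂ hcd]
    exact convex_sharedKernels hK₁ hK₂ hc hd hcd

end SharedRandomness

section Rounding

variable {Ω : Type*}

/-- Order `s` at random by independent exponential clocks of rates `w`, and let a copy of Bob asked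
`v` answer by `F o` for the first `o ∈ s` with `v ∈ E o`. This kernel is the joint law of two
answers when both copies use the same `o`, and it is `0 / 0 = 0` at pairs of questions outside every
`E o`. -/
noncomputable def roundingKernel (s : Finset Ω) (w : Ω → ℝ) (E : Ω → Finset G.Q2)
    (F : Ω → G.Q2 × G.A → ℝ) : G.Kernel := fun a b ↦
  (∑ o ∈ s with a.1 ∈ E o ∧ b.1 ∈ E o, w o * (F o a * F o b)) /
    ∑ o ∈ s with a.1 ∈ E o ∨ b.1 ∈ E o, w o

variable {s : Finset Ω} {w : Ω → ℝ} (E : Ω → Finset G.Q2) (F : Ω → G.Q2 × G.A → ℝ)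

lemma roundingKernel_erase [DecidableEq Ω] {o : Ω} {a b : G.Q2 × G.A}
    (h : ¬(a.1 ∈ E o ∨ b.1 ∈ E o)) :
    roundingKernel (s.erase o) w E F a b = roundingKernel s w E F a b := by
  have hand : ¬(a.1 ∈ E o ∧ b.1 ∈ E o) := fun hab ↦ h (Or.inl hab.1)
  simp [roundingKernel, filter_erase, hand, h]

lemma sum_filter_or_mul_roundingKernel (hw : ∀ o ∈ s, 0 ≤ w o) (a b : G.Q2 × G.A) :
    (∑ o ∈ s with a.1 ∈ E o ∨ b.1 ∈ E o, w o) * roundingKernel s w E F a b =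
      ∑ o ∈ s with a.1 ∈ E o ∧ b.1 ∈ E o, w o * (F o a * F o b) := by
  refine mul_div_cancel_of_imp' fun hzero ↦ sum_eq_zero fun o ho ↦ ?_
  obtain ⟨ho, hao, -⟩ := mem_filter.1 ho
  have hall := (sum_eq_zero_iff_of_nonneg fun o ho ↦ hw o (mem_filter.1 ho).1).1 hzero
  rw [hall o (mem_filter.2 ⟨ho, Or.inl hao⟩), zero_mul]

/-- Conditioning on the first element of the random order. -/
lemma sum_smul_patch_roundingKernel [DecidableEq Ω] (hw : ∀ o ∈ s, 0 ≤ w o) :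
    ∑ o ∈ s, w o • patch (E o) (F o) (roundingKernel (s.erase o) w E F) =
      (∑ o ∈ s, w o) • roundingKernel s w E F := by
  funext a b
  set K := roundingKernel s w E F a b
  have hterm (o : Ω) : w o * patch (E o) (F o) (roundingKernel (s.erase o) w E F) a b =
      (if a.1 ∈ E o ∧ b.1 ∈ E o then w o * (F o a * F o b) else 0) +
        (if ¬(a.1 ∈ E o ∨ b.1 ∈ E o) then w o else 0) * K := by
    unfold patch
    split_ifs with hand hor hor
    · ring
    · exact absurd (Or.inl hand.1) hor
    · ring
    · rw [roundingKernel_erase E F hor]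
      ring
  simp only [Finset.sum_apply, Pi.smul_apply, smul_eq_mul, hterm]
  rw [sum_add_distrib, ← sum_mul, ← sum_filter, ← sum_filter,
    ← sum_filter_or_mul_roundingKernel E F hw, ← add_mul, sum_filter_add_sum_filter_not]

lemma roundingKernel_mem_sharedKernels (hw : ∀ o ∈ s, 0 ≤ w o) (hF : ∀ o, G.IsBob (F o)) :
    roundingKernel s w E F ∈ G.sharedKernels := by
  classical
  induction s using Finset.strongInduction with
  | H s ih =>
    have hpatch : ∀ o ∈ s,
        patch (E o) (F o) (roundingKernel (s.erase o) w E F) ∈ G.sharedKernels := fun o ho ↦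
      patch_mem_sharedKernels (E o) (hF o) <|
        ih _ (erase_ssubset ho) fun o' ho' ↦ hw o' (mem_of_mem_erase ho')
    rcases (sum_nonneg hw).eq_or_lt with hzero | hpos
    · have hw_zero := (sum_eq_zero_iff_of_nonneg hw).1 hzero.symm
      have hK : roundingKernel s w E F = 0 := by
        funext a b
        simp +contextual [roundingKernel, sum_filter, hw_zero]
      rw [hK]
      exact zero_mem_sharedKernels
    · have hmem := convex_sharedKernels.centerMass_mem hw hpos hpatch
      rwa [centerMass, sum_smul_patch_roundingKernel E F hw, inv_smul_smul₀ hpos.ne'] at hmem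

end Rounding

section Thresholds

variable {ι : Type*} [Fintype ι]

/-- The `roundingKernel` over all pairs of an index `i` and a threshold `t`, where `F i` answers the
questions `v` with `t ≤ x v i` and the rates of the thresholds up to `t` add up to `t ^ 2`. -/
noncomputable def minMaxKernel (x : G.Q2 → ι → ℝ) (F : ι → G.Q2 × G.A → ℝ) : G.Kernel := fun a b ↦
  (∑ i, min (x a.1 i) (x b.1 i) ^ 2 * (F i a * F i b)) / ∑ i, max (x a.1 i) (x b.1 i) ^ 2

lemma minMaxKernel_mem_sharedKernels {x : G.Q2 → ι → ℝ} {F : ι → G.Q2 × G.A → ℝ}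
    (hx : ∀ v i, 0 ≤ x v i) (hF : ∀ i, G.IsBob (F i)) :
    minMaxKernel x F ∈ G.sharedKernels := by
  set s : Finset ℝ := univ.image fun p : G.Q2 × ι ↦ x p.1 p.2
  have hxs (v : G.Q2) (i : ι) : x v i ∈ s := mem_image_of_mem _ (mem_univ (v, i))
  have hs : ∀ t ∈ s, 0 ≤ t := by simpa [s] using fun t v i h ↦ h ▸ hx v i
  obtain ⟨w, hw, hsum⟩ := exists_sum_filter_le_eq s (g := (· ^ 2))
    (fun t ht t' _ h ↦ pow_le_pow_left₀ (hs t ht) h 2) fun t _ ↦ sq_nonneg t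
  have hmin (v v' : G.Q2) (i : ι) : min (x v i) (x v' i) ∈ s :=
    min_rec' (· ∈ s) (hxs v i) (hxs v' i)
  have hmax (v v' : G.Q2) (i : ι) : max (x v i) (x v' i) ∈ s :=
    max_rec' (· ∈ s) (hxs v i) (hxs v' i)
  have hkernel : minMaxKernel x F = roundingKernel (univ ×ˢ s) (fun o ↦ w o.2)
      (fun o ↦ {v | o.2 ≤ x v o.1}) fun o ↦ F o.1 := by
    funext a b
    simp only [roundingKernel, mem_filter_univ, ← le_min_iff, ← le_max_iff]
    refine congrArg₂ (· / ·) ?_ ?_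
    · exact (sum_product_filter_le_mul hsum (hmin a.1 b.1) fun i ↦ F i a * F i b).symm
    · simpa using (sum_product_filter_le_mul hsum (hmax a.1 b.1) fun _ ↦ 1).symm
  rw [hkernel]
  exact roundingKernel_mem_sharedKernels _ _ (fun o ho ↦ hw _ (mem_product.1 ho).2) fun o ↦ hF o.1

lemma collide_minMaxKernel (x : G.Q2 → ι → ℝ) (F : ι → G.Q2 × G.A → ℝ) (y y' : G.Query) :
    collide y y' (minMaxKernel x F) =
      (∑ i, min (x y.1 i) (x y'.1 i) ^ 2 * collide y y' fun a b ↦ F i a * F i b) /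
        ∑ i, max (x y.1 i) (x y'.1 i) ^ 2 := by
  have hsum : minMaxKernel x F = ∑ i, fun a b ↦
      (min (x a.1 i) (x b.1 i) ^ 2 / ∑ j, max (x a.1 j) (x b.1 j) ^ 2) * (F i a * F i b) := by
    funext a b
    simp only [minMaxKernel, Finset.sum_apply, sum_div, div_mul_eq_mul_div]
  rw [hsum, map_sum, sum_div]
  refine sum_congr rfl fun i _ ↦ ?_
  rw [collide_smul_of_fst fun v v' ↦ min (x v i) (x v' i) ^ 2 / ∑ j, max (x v j) (x v' j) ^ 2,
    div_mul_eq_mul_div]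

variable {x : G.Q2 → ι → ℝ} {F : ι → G.Q2 × G.A → ℝ}

lemma collide_minMaxKernel_mem_Icc (hx : ∀ v i, 0 ≤ x v i) (hF : ∀ i, G.IsBob (F i))
    (y y' : G.Query) : collide y y' (minMaxKernel x F) ∈ Set.Icc (0 : ℝ) 1 := by
  rw [collide_minMaxKernel]
  refine ⟨div_nonneg (sum_nonneg fun i _ ↦ ?_) (sum_nonneg fun i _ ↦ sq_nonneg _),
    div_le_one_of_le₀ ?_ (sum_nonneg fun i _ ↦ sq_nonneg _)⟩
  · exact mul_nonneg (sq_nonneg _) (collide_mul_nonneg (hF i).1 (hF i).1 y y')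
  · exact sum_min_sq_mul_le_sum_max_sq (hx _) (hx _) fun i ↦ collide_mul_le_one (hF i) (hF i) y y'

lemma sum_collide_le_approxBound (hx : ∀ v, ∑ i, x v i ^ 2 ≤ 1) (hF : ∀ i, G.IsBob (F i))
    (y y' : G.Query) :
    ∑ i, x y.1 i * x y'.1 i * collide y y' (fun a b ↦ F i a * F i b) ≤
      approxBound (collide y y' (minMaxKernel x F)) := by
  have hq₀ (i : ι) := collide_mul_nonneg (hF i).1 (hF i).1 y y'
  have hq₁ (i : ι) := collide_mul_le_one (hF i) (hF i) y y'
  rw [collide_minMaxKernel]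
  refine le_approxBound_div (sum_nonneg fun i _ ↦ mul_nonneg (sq_nonneg _) (hq₀ i))
    (sum_nonneg fun i _ ↦ sq_nonneg _) ?_ (sum_mul_mul_sq_le _ _ hq₀ hq₁)
  linarith [sum_min_sq_mul_add_sum_max_sq_le (x y.1) (x y'.1) hq₁, hx y.1, hx y'.1]

lemma sum_normUsq_op_mul_le_approxBound (hx₀ : ∀ v i, 0 ≤ x v i) (hx₁ : ∀ v, ∑ i, x v i ^ 2 ≤ 1)
    (hF : ∀ i, G.IsBob (F i)) :
    ∑ i, G.normUsq (G.op fun p ↦ x p.1 i * F i p) ≤ approxBound (G.collVal ^ 2) := by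
  set K := minMaxKernel x F
  have hK_le : G.collisionForm K ≤ G.collVal ^ 2 :=
    collisionForm_le_collVal_sq (minMaxKernel_mem_sharedKernels hx₀ hF)
  have hK_nonneg : 0 ≤ G.collisionForm K := by
    rw [collisionForm_apply]
    exact sum_nonneg fun z _ ↦
      mul_nonneg (pairWeight_nonneg z) (collide_minMaxKernel_mem_Icc hx₀ hF _ _).1
  calc ∑ i, G.normUsq (G.op fun p ↦ x p.1 i * F i p)
      = ∑ z : G.Q1 × G.Query × G.Query, G.pairWeight z * ∑ i,
          x z.2.1.1 i * x z.2.2.1 i * collide z.2.1 z.2.2 (fun a b ↦ F i a * F i b) := by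
        simp only [normUsq_op, collisionForm_apply, mul_sum]
        rw [sum_comm]
        refine sum_congr rfl fun z _ ↦ sum_congr rfl fun i _ ↦ ?_
        rw [← collide_smul_of_fst fun v v' ↦ x v i * x v' i]
        simp only [mul_mul_mul_comm]
    _ ≤ ∑ z : G.Q1 × G.Query × G.Query,
          G.pairWeight z * approxBound (collide z.2.1 z.2.2 K) :=
        sum_le_sum fun z _ ↦ mul_le_mul_of_nonneg_left
          (sum_collide_le_approxBound hx₁ hF z.2.1 z.2.2) (pairWeight_nonneg z)
    _ ≤ approxBound (G.collisionForm K) := by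
        rw [collisionForm_apply]
        exact concaveOn_approxBound.le_map_sum (fun z _ ↦ pairWeight_nonneg z) sum_pairWeight
          fun z _ ↦ collide_minMaxKernel_mem_Icc hx₀ hF z.2.1 z.2.2
    _ ≤ approxBound (G.collVal ^ 2) :=
        strictMonoOn_approxBound.monotoneOn ⟨hK_nonneg, hK_le.trans collVal_sq_mem_Icc.2⟩
          collVal_sq_mem_Icc hK_le

end Thresholds

section VectorAssignments

lemma exists_isBob_eq_mul {f : G.Q2 × G.A → ℝ} (hf : ∀ p, 0 ≤ f p) :
    ∃ F, G.IsBob F ∧ f = fun p ↦ (∑ β, f (p.1, β)) * F p := by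
  obtain ⟨F₀, hF₀⟩ := G.exists_isBob
  have hm (v : G.Q2) : 0 ≤ ∑ β, f (v, β) := sum_nonneg fun _ _ ↦ hf _
  refine ⟨fun p ↦ if ∑ β, f (p.1, β) = 0 then F₀ p else f p / ∑ β, f (p.1, β),
    ⟨fun p ↦ ?_, fun v ↦ ?_⟩, funext fun p ↦ ?_⟩
  · dsimp only
    split_ifs
    exacts [hF₀.1 p, div_nonneg (hf p) (hm p.1)]
  · dsimp only
    split_ifs with h
    · exact hF₀.2 v
    · rw [← sum_div, div_self h]
  · dsimp only
    split_ifs with h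
    · rw [h, zero_mul]
      exact (sum_eq_zero_iff_of_nonneg fun _ _ ↦ hf _).1 h p.2 (mem_univ _)
    · rw [mul_div_cancel₀ _ h]

lemma sum_normUsq_op_le_approxBound {ι : Type*} [Fintype ι] {f : G.Q2 × G.A → ι → ℝ}
    (hf : ∀ p i, 0 ≤ f p i) (hf₁ : ∀ v, ∑ i, (∑ β, f (v, β) i) ^ 2 ≤ 1) :
    ∑ i, G.normUsq (G.op fun p ↦ f p i) ≤ approxBound (G.collVal ^ 2) := by
  choose F hF hfF using fun i ↦ exists_isBob_eq_mul fun p ↦ hf p i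
  rw [sum_congr rfl fun i _ ↦ congrArg (G.normUsq <| G.op ·) (hfF i)]
  exact sum_normUsq_op_mul_le_approxBound (x := fun v i ↦ ∑ β, f (v, β) i)
    (fun v i ↦ sum_nonneg fun _ _ ↦ hf _ i) hf₁ hF

lemma valPlus_sq_le_approxBound : G.valPlus ^ 2 ≤ approxBound (G.collVal ^ 2) := by
  have hnonneg : 0 ≤ G.valPlus := by
    refine Real.sSup_nonneg ?_
    rintro _ ⟨n, -, f, -, -, rfl⟩
    exact Real.sqrt_nonneg _
  rw [← Real.le_sqrt hnonneg (approxBound_nonneg (sq_nonneg _))]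
  refine Real.sSup_le ?_ (Real.sqrt_nonneg _)
  rintro _ ⟨n, -, f, hf, hf₁, rfl⟩
  refine Real.sqrt_le_sqrt ?_
  calc ∑ u, G.wU u * ∑ α, ∑ i, G.op (fun q ↦ f q i) (u, α) ^ 2
      = ∑ i, G.normUsq (G.op fun q ↦ f q i) := by
        simp only [normUsq, mul_sum]
        rw [sum_comm (s := univ (α := Fin n))]
        exact sum_congr rfl fun u _ ↦ sum_comm
    _ ≤ approxBound (G.collVal ^ 2) :=
        sum_normUsq_op_le_approxBound hf fun v ↦ Real.sqrt_le_one.1 (hf₁ v)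

end VectorAssignments

end ProjGame

/-- **Approximation.** If `val₊(G)² > ρ` then `‖G‖² > (1-√(1-ρ²))/(1+√(1-ρ²))`;
contrapositively, if `‖G‖² < δ` then `val₊(G)² < 2√δ/(1+δ)`. -/
theorem valPlus_approximation (G : ProjGame) (ρ : ℝ) (hρ0 : 0 ≤ ρ) (hρ1 : ρ ≤ 1) :
    (ρ < G.valPlus ^ 2 →
      (1 - Real.sqrt (1 - ρ ^ 2)) / (1 + Real.sqrt (1 - ρ ^ 2)) < G.collVal ^ 2) ∧
    (∀ δ : ℝ, 0 ≤ δ → δ ≤ 1 → G.collVal ^ 2 < δ →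
      G.valPlus ^ 2 < 2 * Real.sqrt δ / (1 + δ)) := by
  have hbound : G.valPlus ^ 2 ≤ approxBound (G.collVal ^ 2) := ProjGame.valPlus_sq_le_approxBound
  have hcoll : G.collVal ^ 2 ∈ Set.Icc (0 : ℝ) 1 := ProjGame.collVal_sq_mem_Icc
  refine ⟨fun hlt ↦ ?_, fun δ hδ0 hδ1 hlt ↦ ?_⟩
  · have hr : √(1 - ρ ^ 2) ≤ 1 := Real.sqrt_le_one.2 (sub_le_self 1 (sq_nonneg ρ))
    have hδ := one_sub_div_one_add_mem_Icc (Real.sqrt_nonneg _) hr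
    rw [← strictMonoOn_approxBound.lt_iff_lt hδ hcoll, approxBound_one_sub_sqrt_div hρ0 hρ1]
    exact hlt.trans_le hbound
  · exact hbound.trans_lt (strictMonoOn_approxBound hcoll ⟨hδ0, hδ1⟩ hlt)
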